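/- Let A = (Q, Σ, Δ, Q₀, F) be a nondeterministic Büchi automaton with Q₀ ≠ ∅, and let B be any transition-based deterministic parity automaton obtained from the unified construction for A (with arbitrary choices of valid merge partitions in each transition). Then L(B) = L(A). -/

import Mathlib

/-! Core definitions: NBA, TDPA, ranked slices, and the unified
determinization construction. -/

universe u v

/-- A nondeterministic Büchi automaton over state type `Q` and alphabet `Alp`. -/
structure NBA (Q : Type u) (Alp : Type v) where
  delta : Q → Alp → Set Q
  Q0 : Set Q
  F : Set Q

namespace NBA

variable {Q : Type u} {Alp : Type v}

/-- `Δ(X, x)`: successors of a set of states. -/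
def nextSet (A : NBA Q Alp) (X : Set Q) (x : Alp) : Set Q := ⋃ q ∈ X, A.delta q x

/-- A run of the NBA on the word `w`. -/
def IsRun (A : NBA Q Alp) (w : ℕ → Alp) (q : ℕ → Q) : Prop :=
  q 0 ∈ A.Q0 ∧ ∀ i, q (i + 1) ∈ A.delta (q i) (w i)

/-- Acceptance: some run visits `F` infinitely often. -/
def Accepts (A : NBA Q Alp) (w : ℕ → Alp) : Prop :=
  ∃ q, A.IsRun w q ∧ ∀ N, ∃ i, N ≤ i ∧ q i ∈ A.F

end NBA

/-- A transition-based deterministic parity automaton. -/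
structure TDPA (P : Type u) (Alp : Type v) where
  delta : P → Alp → P
  p0 : P
  c : P → Alp → ℕ

namespace TDPA

variable {P : Type u} {Alp : Type v}

/-- The unique run of the TDPA on `w`. -/
def run (B : TDPA P Alp) (w : ℕ → Alp) : ℕ → P
  | 0 => B.p0
  | i + 1 => B.delta (B.run w i) (w i)

/-- Acceptance: the minimum priority occurring infinitely often on the run is even. -/
def Accepts (B : TDPA P Alp) (w : ℕ → Alp) : Prop :=
  ∃ m, (∀ N, ∃ i, N ≤ i ∧ B.c (B.run w i) (w i) = m) ∧
    (∀ m', (∀ N, ∃ i, N ≤ i ∧ B.c (B.run w i) (w i) = m') → m ≤ m') ∧ Even m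

/-- Reachability from the initial state. -/
def Reachable (B : TDPA P Alp) (p : P) : Prop :=
  ∃ l : List Alp, l.foldl B.delta B.p0 = p

end TDPA

/-- A (ranked) slice: a tuple `S 1, …, S n` of subsets of `Q` together with a
ranking function `rk`.  Only the values on `{1, …, n}` are relevant. -/
structure Slice (Q : Type u) where
  n : ℕ
  S : ℕ → Set Q
  rk : ℕ → ℕ

namespace Slice

variable {Q : Type u}

/-- A valid ranked slice: the sets are nonempty and pairwise disjoint, the ranking is a
bijection of `{1,…,n}` and the last set has rank `1`. -/
def Valid (s : Slice Q) : Prop :=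
  (∀ i ∈ Set.Icc 1 s.n, (s.S i).Nonempty) ∧
  (∀ i ∈ Set.Icc 1 s.n, ∀ j ∈ Set.Icc 1 s.n, i ≠ j → Disjoint (s.S i) (s.S j)) ∧
  Set.BijOn s.rk (Set.Icc 1 s.n) (Set.Icc 1 s.n) ∧
  (1 ≤ s.n → s.rk s.n = 1)

/-- `Q_t`: union of all sets of the slice. -/
def states (s : Slice Q) : Set Q := ⋃ i ∈ Set.Icc 1 s.n, s.S i

/-- `idx q`: the (unique) index of the set containing `q`. -/
noncomputable def idx (s : Slice Q) (q : Q) : ℕ :=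
  sInf {i | 1 ≤ i ∧ i ≤ s.n ∧ q ∈ s.S i}

end Slice

variable {Q : Type u} {Alp : Type v}

/-- `Δ_t(q, x)`: successors of `q` not reachable from a set strictly to the left. -/
noncomputable def dT (A : NBA Q Alp) (s : Slice Q) (q : Q) (x : Alp) : Set Q :=
  A.delta q x \ A.nextSet (⋃ i ∈ Set.Ico 1 (s.idx q), s.S i) x

/-- `Δ_t(X, x)` for a set `X`. -/
noncomputable def dTs (A : NBA Q Alp) (s : Slice Q) (X : Set Q) (x : Alp) : Set Q :=
  ⋃ q ∈ X, dT A s q x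

/-- The sets `Ŝ_j` of the step stage: odd positions are left (accepting) children, even
positions right (non-accepting) children. -/
noncomputable def hatS (A : NBA Q Alp) (s : Slice Q) (x : Alp) (j : ℕ) : Set Q :=
  if j % 2 = 1 then dTs A s (s.S ((j + 1) / 2)) x ∩ A.F
  else dTs A s (s.S (j / 2)) x \ A.F

/-- The ranking `α̂` of the step stage. -/
def hatRk (s : Slice Q) (j : ℕ) : ℕ :=
  if j % 2 = 1 then s.n + 1 else s.rk (j / 2)

/-- The prune stage: `xs 1 < … < xs nt` enumerates the indices of the nonempty sets
among `Ŝ_1, …, Ŝ_{2n}`, and `xs (nt+1) = 2n + 1`. -/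
def IsPrune (A : NBA Q Alp) (s : Slice Q) (x : Alp) (nt : ℕ) (xs : ℕ → ℕ) : Prop :=
  StrictMonoOn xs (Set.Icc 1 nt) ∧
  (∀ i ∈ Set.Icc 1 nt, xs i ∈ Set.Icc 1 (2 * s.n) ∧ (hatS A s x (xs i)).Nonempty) ∧
  (∀ j ∈ Set.Icc 1 (2 * s.n), (hatS A s x j).Nonempty → ∃ i ∈ Set.Icc 1 nt, xs i = j) ∧
  xs (nt + 1) = 2 * s.n + 1

/-- The ranking `α̃` after prune: `α̃ i = min {α̂ j | xs i ≤ j < xs (i+1)}`. -/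
noncomputable def tildeRk (s : Slice Q) (xs : ℕ → ℕ) (i : ℕ) : ℕ :=
  sInf (hatRk s '' {j | xs i ≤ j ∧ j < xs (i + 1)})

/-- The green ranks: ranks in the image of `α̃` that mark an empty set after step. -/
def greenSet (A : NBA Q Alp) (s : Slice Q) (x : Alp) (nt : ℕ) (xs : ℕ → ℕ) : Set ℕ :=
  {r | (∃ i ∈ Set.Icc 1 nt, tildeRk s xs i = r) ∧
    ∃ j ∈ Set.Icc 1 (2 * s.n), hatS A s x j = ∅ ∧ hatRk s j = r}

/-- The red ranks: ranks in the image of `α̂` but not of `α̃`. -/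
def redSet (s : Slice Q) (nt : ℕ) (xs : ℕ → ℕ) : Set ℕ :=
  {r | (∃ j ∈ Set.Icc 1 (2 * s.n), hatRk s j = r) ∧ ¬ ∃ i ∈ Set.Icc 1 nt, tildeRk s xs i = r}

open Classical in
/-- The dominating rank: the minimum of the active ranks `G ∪ R`, or `|Q| + 1` if there
is no active rank. -/
noncomputable def domRank (G R : Set ℕ) (card : ℕ) : ℕ :=
  if (G ∪ R).Nonempty then sInf (G ∪ R) else card + 1

/-- A partition of `{1,…,nt}` into consecutive intervals, described by its boundaries:
the `j`-th interval is `Icc (b (j-1) + 1) (b j)`. -/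
def IsIntervalPartition (nt n' : ℕ) (b : ℕ → ℕ) : Prop :=
  b 0 = 0 ∧ b n' = nt ∧ StrictMonoOn b (Set.Icc 0 n')

/-- The merge constraints: intervals containing a rank `< k` are singletons, and an index
carrying rank `k` is the maximum of its interval. -/
def MergeConstraints (n' : ℕ) (b : ℕ → ℕ) (aT : ℕ → ℕ) (k : ℕ) : Prop :=
  ∀ j ∈ Set.Icc 1 n', ∀ l ∈ Set.Icc (b (j - 1) + 1) (b j),
    (aT l < k → b j = b (j - 1) + 1) ∧ (aT l = k → l = b j)

/-- A full transition of the (unified) construction, via prune data `(nt, xs)` and the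
merge partition `(n', b)`. -/
noncomputable def TransVia [Fintype Q] (A : NBA Q Alp) (s : Slice Q) (x : Alp)
    (s' : Slice Q) (pr : ℕ) (nt : ℕ) (xs : ℕ → ℕ) (n' : ℕ) (b : ℕ → ℕ) : Prop :=
  IsPrune A s x nt xs ∧
  IsIntervalPartition nt n' b ∧
  MergeConstraints n' b (tildeRk s xs)
    (domRank (greenSet A s x nt xs) (redSet s nt xs) (Fintype.card Q)) ∧
  ((domRank (greenSet A s x nt xs) (redSet s nt xs) (Fintype.card Q) ∈ greenSet A s x nt xs ∧
      pr = 2 * domRank (greenSet A s x nt xs) (redSet s nt xs) (Fintype.card Q)) ∨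
   (domRank (greenSet A s x nt xs) (redSet s nt xs) (Fintype.card Q) ∉ greenSet A s x nt xs ∧
      pr = 2 * domRank (greenSet A s x nt xs) (redSet s nt xs) (Fintype.card Q) - 1)) ∧
  s'.n = n' ∧
  (∀ i ∈ Set.Icc 1 n', s'.S i = ⋃ j ∈ Set.Icc (b (i - 1) + 1) (b i), hatS A s x (xs j)) ∧
  s'.Valid ∧
  (∀ i ∈ Set.Icc 1 n', ∀ j ∈ Set.Icc 1 n',
    sInf (tildeRk s xs '' Set.Icc (b (i - 1) + 1) (b i)) <
      sInf (tildeRk s xs '' Set.Icc (b (j - 1) + 1) (b j)) → s'.rk i < s'.rk j)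

/-- A transition of the unified construction (any valid merge partition). -/
noncomputable def UnifiedTrans [Fintype Q] (A : NBA Q Alp) (s : Slice Q) (x : Alp)
    (s' : Slice Q) (pr : ℕ) : Prop :=
  ∃ nt xs n' b, TransVia A s x s' pr nt xs n' b

/-- A transition of the Muller-Schupp construction (merge partition into singletons). -/
noncomputable def MSTrans [Fintype Q] (A : NBA Q Alp) (s : Slice Q) (x : Alp)
    (s' : Slice Q) (pr : ℕ) : Prop :=
  ∃ nt xs, TransVia A s x s' pr nt xs nt id

/-- `B` is obtained from the unified construction for `A`. -/
noncomputable def ObtainedUnified [Fintype Q] (A : NBA Q Alp) (B : TDPA (Slice Q) Alp) : Prop :=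
  B.p0.n = 1 ∧ B.p0.S 1 = A.Q0 ∧ B.p0.rk 1 = 1 ∧
  ∀ p, B.Reachable p → ∀ x, UnifiedTrans A p x (B.delta p x) (B.c p x)

/-- `B` is obtained from the Muller-Schupp construction for `A`. -/
noncomputable def ObtainedMS [Fintype Q] (A : NBA Q Alp) (B : TDPA (Slice Q) Alp) : Prop :=
  B.p0.n = 1 ∧ B.p0.S 1 = A.Q0 ∧ B.p0.rk 1 = 1 ∧
  ∀ p, B.Reachable p → ∀ x, MSTrans A p x (B.delta p x) (B.c p x)

/-!
Fix a word and let `m` be the least priority that its sequence of slices produces infinitely often.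
Each state of a slice is inherited from the leftmost set with a transition to it. If a rank is not
red and does not exceed the dominating rank, then its set is a barrier: the heirs of a state to its
right stay to its right, and the successors of a state in it or to its left stay there; below the
dominating rank, the successors of a state strictly to its left even stay strictly to its left.

If `m = 2 * K`, then `K` is eventually a permanent barrier, and the right child of its set is empty
infinitely often. By Kőnig's lemma some run has, at every time, an heir in the barrier set at
arbitrarily late such moments, so it is never to the right of the barrier. While it avoids `F` it
always enters right children and thus stays rightmost among the heirs of its earlier states. At the
next of these moments it is therefore in the barrier set, whose right child is empty, and has to
visit `F`.

If `m = 2 * K - 1` and `ρ` were an accepting run, then eventually each rank below `K` is absent, or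
strictly to the left of `ρ`, or a barrier strictly to the right of `ρ`, because a visit to `F`
pushes `ρ` out of a set that it shares with a barrier. Hence only ranks at least `K` occur in the
window from the position of `ρ` up to the first barrier to its right. So `K` is at most `|Q|` and
the priority `m` means that `K` is red. But the least rank in the window never increases, and it
decreases whenever `K` is red, which happens infinitely often.
-/

section Preliminaries

open Filter

theorem exists_mem_Ico_pred {α : Type*} [LinearOrder α] {f : ℕ → α} {n : ℕ} {x : α}
    (h0 : f 0 ≤ x) (hn : x < f n) : ∃ i ∈ Set.Icc 1 n, x ∈ Set.Ico (f (i - 1)) (f i) := by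
  induction n with
  | zero => exact absurd h0 hn.not_ge
  | succ n ih =>
    rcases lt_or_ge x (f n) with h | h
    · obtain ⟨i, hi, hx⟩ := ih h
      exact ⟨i, ⟨hi.1, hi.2.trans n.le_succ⟩, hx⟩
    · exact ⟨n + 1, ⟨n.succ_pos, le_rfl⟩, h, hn⟩

theorem le_of_mem_Ico_pred {α : Type*} [Preorder α] {f : ℕ → α} {n i j : ℕ} {x y : α}
    (hf : MonotoneOn f (Set.Icc 0 n)) (hi : i ≤ n) (hx : x ∈ Set.Ico (f (i - 1)) (f i))
    (hy : y ∈ Set.Ico (f (j - 1)) (f j)) (hxy : x ≤ y) : i ≤ j := by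
  by_contra! hji
  have hji' : f j ≤ f (i - 1) := hf ⟨by lia, by lia⟩ ⟨by lia, by lia⟩ (by lia)
  exact ((hxy.trans_lt hy.2).trans_le (hji'.trans hx.1)).false

theorem rank_eq_ncard {ι α : Type*} [LinearOrder α] {rk : ι → ℕ} {μ : ι → α} {s : Set ι} {m : ℕ}
    (hrk : Set.BijOn rk s (Set.Icc 1 m)) (hlt : ∀ i ∈ s, ∀ j ∈ s, μ i < μ j → rk i < rk j)
    {j : ι} (hj : j ∈ s) (hinj : Set.InjOn μ {i ∈ s | μ i ≤ μ j}) :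
    rk j = (μ '' s ∩ Set.Iic (μ j)).ncard := by
  have hrank : rk '' {i ∈ s | μ i ≤ μ j} = Set.Icc 1 (rk j) := by
    ext r
    constructor
    · rintro ⟨i, ⟨hi, hij⟩, rfl⟩
      rcases hij.lt_or_eq with h | h
      · exact ⟨(hrk.mapsTo hi).1, (hlt i hi j hj h).le⟩
      · rw [hinj ⟨hi, hij⟩ ⟨hj, le_rfl⟩ h]
        exact ⟨(hrk.mapsTo hj).1, le_rfl⟩
    · rintro ⟨h1, h2⟩
      obtain ⟨i, hi, rfl⟩ := hrk.surjOn ⟨h1, h2.trans (hrk.mapsTo hj).2⟩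
      exact ⟨i, ⟨hi, le_of_not_gt fun h => h2.not_gt (hlt j hj i hi h)⟩, rfl⟩
  have hμ : μ '' {i ∈ s | μ i ≤ μ j} = μ '' s ∩ Set.Iic (μ j) := by
    rw [← Set.image_inter_preimage]
    rfl
  rw [← hμ, hinj.ncard_image, ← (hrk.injOn.mono (Set.sep_subset _ _)).ncard_image, hrank,
    Set.ncard_Icc_nat, Nat.add_sub_cancel]

theorem eventually_or_eventually_not {P : ℕ → Prop} (h : ∀ᶠ i in atTop, P i → P (i + 1)) :
    (∀ᶠ i in atTop, P i) ∨ ∀ᶠ i in atTop, ¬ P i := by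
  obtain ⟨N, hN⟩ := eventually_atTop.1 h
  by_cases hP : ∃ i ≥ N, P i
  · obtain ⟨i, hi, hPi⟩ := hP
    exact .inl <| eventually_atTop.2 ⟨i, fun _ hj =>
      Nat.le_induction hPi (fun k hk => hN k (hi.trans hk)) _ hj⟩
  · push Not at hP
    exact .inr <| eventually_atTop.2 ⟨N, hP⟩

theorem not_frequently_lt_of_eventually_le {α : Type*} [Preorder α] [WellFoundedLT α] {u : ℕ → α}
    (h : ∀ᶠ i in atTop, u (i + 1) ≤ u i) : ¬ ∃ᶠ i in atTop, u (i + 1) < u i := by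
  obtain ⟨N, hN⟩ := eventually_atTop.1 h
  have hanti : AntitoneOn u (Set.Ici N) := antitoneOn_nat_Ici_of_succ_le hN
  obtain ⟨_, ⟨i, hi, rfl⟩, hmin⟩ :=
    wellFounded_lt.has_min (u '' Set.Ici N) ⟨u N, N, Set.self_mem_Ici, rfl⟩
  refine fun hfreq => ?_
  obtain ⟨j, hij, hj⟩ := frequently_atTop.1 hfreq i
  have hNj : N ≤ j := hi.trans hij
  exact hmin _ ⟨j + 1, hNj.trans j.le_succ, rfl⟩ (hj.trans_le (hanti hi hNj hij))

theorem exists_frequently_eq_and_eventually_le {ι : Type*} {l : Filter ι} [l.NeBot] {f : ι → ℕ}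
    {C : ℕ} (hf : ∀ i, f i ≤ C) : ∃ m, (∃ᶠ i in l, f i = m) ∧ ∀ᶠ i in l, m ≤ f i := by
  classical
  have hex : ∃ m, ∃ᶠ i in l, f i = m := by
    obtain ⟨m, -, hm⟩ := (frequently_exists_finite (Set.finite_Iic C)).1
      (Frequently.of_forall fun i => ⟨f i, hf i, rfl⟩ : ∃ᶠ i in l, ∃ m ∈ Set.Iic C, f i = m)
    exact ⟨m, hm⟩
  have hne : ∀ᶠ i in l, ∀ m ∈ Set.Iio (Nat.find hex), f i ≠ m :=
    (eventually_all_finite (Set.finite_Iio _)).2 fun _ hm => not_frequently.1 (Nat.find_min hex hm)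
  refine ⟨Nat.find hex, Nat.find_spec hex, hne.mono fun i hi => ?_⟩
  exact le_of_not_gt fun hlt => hi _ hlt rfl

end Preliminaries

/-- `TimedPath E i x j y`: a path from `x` at time `i` to `y` at time `j`, whose step at time `k`
is taken from the relation `E k`. -/
inductive TimedPath {X : Type*} (E : ℕ → X → X → Prop) : ℕ → X → ℕ → X → Prop
  | refl (i : ℕ) (x : X) : TimedPath E i x i x
  | head {i j : ℕ} {x y z : X} : E i x y → TimedPath E (i + 1) y j z → TimedPath E i x j z

namespace TimedPath

open Filter

variable {X : Type*} {E : ℕ → X → X → Prop}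

theorem tail {i j : ℕ} {x y z : X} (h : TimedPath E i x j y) (hyz : E j y z) :
    TimedPath E i x (j + 1) z := by
  induction h with
  | refl i x => exact head hyz (refl _ _)
  | head hxy _ ih => exact head hxy (ih hyz)

theorem le {i j : ℕ} {x y : X} (h : TimedPath E i x j y) : i ≤ j := by
  induction h with
  | refl => exact le_rfl
  | head _ _ ih => exact (Nat.le_succ _).trans ih

theorem preserves {P : ℕ → X → Prop} {i j : ℕ} {x y : X} (h : TimedPath E i x j y) (hx : P i x)
    (hstep : ∀ k, i ≤ k → k < j → ∀ a b, E k a b → P k a → P (k + 1) b) : P j y := by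
  induction h with
  | refl => exact hx
  | head hxy hp ih =>
    exact ih (hstep _ le_rfl hp.le _ _ hxy hx) fun k hk => hstep k (Nat.le_of_succ_le hk)

theorem exists_of_forall_exists_pred {V : ℕ → X → Prop}
    (hpred : ∀ i y, V (i + 1) y → ∃ x, V i x ∧ E i x y) {i : ℕ} {y : X} (hy : V i y) :
    ∃ x, V 0 x ∧ TimedPath E 0 x i y := by
  induction i generalizing y with
  | zero => exact ⟨y, hy, refl 0 y⟩
  | succ i ih =>
    obtain ⟨x, hx, hxy⟩ := hpred i y hy
    obtain ⟨x₀, hx₀, hp⟩ := ih hx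
    exact ⟨x₀, hx₀, hp.tail hxy⟩

theorem exists_edge_frequently [Finite X] {T : ℕ → X → Prop} {i : ℕ} {x : X}
    (h : ∃ᶠ j in atTop, ∃ z, TimedPath E i x j z ∧ T j z) :
    ∃ y, E i x y ∧ ∃ᶠ j in atTop, ∃ z, TimedPath E (i + 1) y j z ∧ T j z := by
  have hstep : ∃ᶠ j in atTop, ∃ y, E i x y ∧ ∃ z, TimedPath E (i + 1) y j z ∧ T j z := by
    refine (h.and_eventually (eventually_gt_atTop i)).mono ?_
    rintro j ⟨⟨z, hp, hz⟩, hij⟩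
    cases hp with
    | refl => exact absurd hij (lt_irrefl _)
    | head hxy hp => exact ⟨_, hxy, z, hp, hz⟩
  obtain ⟨y, hy⟩ := frequently_exists.1 hstep
  exact ⟨y, frequently_and_distrib_left.1 hy⟩

/-- Kőnig's lemma: `ρ` only visits points from which `T` can still be reached arbitrarily late. -/
theorem exists_forall_frequently [Finite X] {V T : ℕ → X → Prop}
    (h : ∃ᶠ j in atTop, ∃ x, V 0 x ∧ ∃ z, TimedPath E 0 x j z ∧ T j z) :
    ∃ ρ : ℕ → X, V 0 (ρ 0) ∧ (∀ i, E i (ρ i) (ρ (i + 1))) ∧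
      ∀ i, ∃ᶠ j in atTop, ∃ z, TimedPath E i (ρ i) j z ∧ T j z := by
  obtain ⟨x₀, hx₀⟩ := frequently_exists.1 h
  obtain ⟨hV, hfreq⟩ := frequently_and_distrib_left.1 hx₀
  choose next hnext using fun i (x : {x // ∃ᶠ j in atTop, ∃ z, TimedPath E i x j z ∧ T j z}) =>
    exists_edge_frequently x.2
  let ρ (i : ℕ) : {x // ∃ᶠ j in atTop, ∃ z, TimedPath E i x j z ∧ T j z} :=
    Nat.rec ⟨x₀, hfreq⟩ (fun i x => ⟨next i x, (hnext i x).2⟩) i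
  exact ⟨fun i => (ρ i).1, hV, fun i => (hnext i (ρ i)).1, fun i => (ρ i).2⟩

end TimedPath

namespace Slice

variable {s : Slice Q}

theorem mem_states {q : Q} : q ∈ s.states ↔ ∃ i ∈ Set.Icc 1 s.n, q ∈ s.S i := by
  simp only [states, Set.mem_iUnion, exists_prop]

/-- The position carrying the rank `r`; only meaningful for ranks `r ∈ {1, …, n}` of a valid
slice. -/
noncomputable def pos (s : Slice Q) (r : ℕ) : ℕ := Function.invFunOn s.rk (Set.Icc 1 s.n) r

namespace Valid

theorem bijOn_rk (hs : s.Valid) : Set.BijOn s.rk (Set.Icc 1 s.n) (Set.Icc 1 s.n) := hs.2.2.1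

theorem rk_mem (hs : s.Valid) {i : ℕ} (hi : i ∈ Set.Icc 1 s.n) : s.rk i ∈ Set.Icc 1 s.n :=
  hs.bijOn_rk.mapsTo hi

theorem pos_mem (hs : s.Valid) {r : ℕ} (hr : r ∈ Set.Icc 1 s.n) : s.pos r ∈ Set.Icc 1 s.n :=
  Function.invFunOn_mem (hs.bijOn_rk.surjOn hr)

theorem rk_pos (hs : s.Valid) {r : ℕ} (hr : r ∈ Set.Icc 1 s.n) : s.rk (s.pos r) = r :=
  Function.invFunOn_eq (hs.bijOn_rk.surjOn hr)

theorem pos_rk (hs : s.Valid) {i : ℕ} (hi : i ∈ Set.Icc 1 s.n) : s.pos (s.rk i) = i :=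
  hs.bijOn_rk.injOn (hs.pos_mem (hs.rk_mem hi)) hi (hs.rk_pos (hs.rk_mem hi))

theorem idx_eq (hs : s.Valid) {q : Q} {i : ℕ} (hi : i ∈ Set.Icc 1 s.n) (hq : q ∈ s.S i) :
    s.idx q = i := by
  have huniq : {j | 1 ≤ j ∧ j ≤ s.n ∧ q ∈ s.S j} = {i} := by
    ext j
    refine ⟨fun ⟨h1, hn, hqj⟩ => ?_, ?_⟩
    · by_contra hne
      exact Set.disjoint_left.1 (hs.2.1 j ⟨h1, hn⟩ i hi hne) hqj hq
    · rintro rfl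
      exact ⟨hi.1, hi.2, hq⟩
  rw [idx, huniq, csInf_singleton]

theorem idx_mem (hs : s.Valid) {q : Q} (hq : q ∈ s.states) : s.idx q ∈ Set.Icc 1 s.n := by
  obtain ⟨i, hi, hqi⟩ := mem_states.1 hq
  rwa [hs.idx_eq hi hqi]

theorem mem_S_idx (hs : s.Valid) {q : Q} (hq : q ∈ s.states) : q ∈ s.S (s.idx q) := by
  obtain ⟨i, hi, hqi⟩ := mem_states.1 hq
  rwa [hs.idx_eq hi hqi]

theorem n_le_card [Fintype Q] (hs : s.Valid) : s.n ≤ Fintype.card Q := by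
  have hsub : Set.Icc 1 s.n ⊆ s.idx '' Set.univ := fun i hi =>
    let ⟨q, hq⟩ := hs.1 i hi
    ⟨q, trivial, hs.idx_eq hi hq⟩
  calc s.n = (Set.Icc 1 s.n).ncard := by simp
    _ ≤ (s.idx '' Set.univ).ncard := Set.ncard_le_ncard hsub
    _ ≤ (Set.univ : Set Q).ncard := Set.ncard_image_le
    _ = Fintype.card Q := by rw [Set.ncard_univ, Nat.card_eq_fintype_card]

end Valid

end Slice

section Step

variable {A : NBA Q Alp} {s : Slice Q} {x : Alp}

theorem hatRk_two_mul (i : ℕ) : hatRk s (2 * i) = s.rk i := by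
  simp [hatRk]

theorem hatRk_mem (hs : s.Valid) {h : ℕ} (hh : h ∈ Set.Icc 1 (2 * s.n)) :
    hatRk s h ∈ Set.Icc 1 (s.n + 1) := by
  obtain ⟨h1, hn⟩ := hh
  rw [hatRk]
  split_ifs with hodd
  · exact ⟨by lia, le_rfl⟩
  · obtain ⟨h1', hn'⟩ := hs.rk_mem (i := h / 2) ⟨by lia, by lia⟩
    exact ⟨h1', by lia⟩

theorem hat_eq_two_mul_pos (hs : s.Valid) {h : ℕ} (hh : h ∈ Set.Icc 1 (2 * s.n))
    (hrk : hatRk s h ≤ s.n) : h = 2 * s.pos (hatRk s h) := by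
  rcases Nat.even_or_odd' h with ⟨i, rfl | rfl⟩
  · rw [hatRk_two_mul, hs.pos_rk ⟨by have := hh.1; lia, by have := hh.2; lia⟩]
  · have hodd : (2 * i + 1) % 2 = 1 := by lia
    rw [hatRk, if_pos hodd] at hrk
    exact absurd hrk (by lia)

theorem two_mul_mem {i : ℕ} (hi : i ∈ Set.Icc 1 s.n) : 2 * i ∈ Set.Icc 1 (2 * s.n) :=
  ⟨by have := hi.1; lia, Nat.mul_le_mul_left 2 hi.2⟩

/-- `q` lies in the set `Ŝ_h` of the step stage. -/
def HatMem (A : NBA Q Alp) (s : Slice Q) (x : Alp) (h : ℕ) (q : Q) : Prop :=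
  h ∈ Set.Icc 1 (2 * s.n) ∧ q ∈ hatS A s x h

open Classical in
/-- The position of the child of the `i`-th set that may receive the state `q`: the left child
`2 * i - 1` if `q` is accepting and the right child `2 * i` otherwise. -/
noncomputable def childPos (A : NBA Q Alp) (i : ℕ) (q : Q) : ℕ :=
  if q ∈ A.F then 2 * i - 1 else 2 * i

theorem childPos_le_two_mul (i : ℕ) (q : Q) : childPos A i q ≤ 2 * i := by
  grind [childPos]

theorem two_mul_le_childPos_succ (i : ℕ) (q : Q) : 2 * i ≤ childPos A i q + 1 := by
  grind [childPos]

theorem childPos_lt_two_mul {i : ℕ} {q : Q} (hi : 1 ≤ i) (hq : q ∈ A.F) :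
    childPos A i q < 2 * i := by
  grind [childPos]

theorem childPos_eq_two_mul {i : ℕ} {q : Q} (hq : q ∉ A.F) : childPos A i q = 2 * i :=
  if_neg hq

theorem childPos_mem {i : ℕ} (hi : i ∈ Set.Icc 1 s.n) (q : Q) :
    childPos A i q ∈ Set.Icc 1 (2 * s.n) := by
  grind [childPos]

theorem childPos_mono (q : Q) : Monotone fun i => childPos A i q := by
  intro i j hij
  grind [childPos]

theorem mem_dTs_S (hs : s.Valid) {i : ℕ} (hi : i ∈ Set.Icc 1 s.n) {q' : Q} :
    q' ∈ dTs A s (s.S i) x ↔ ∃ q ∈ s.states, s.idx q = i ∧ q' ∈ dT A s q x := by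
  simp only [dTs, Set.mem_iUnion, exists_prop]
  constructor
  · rintro ⟨q, hq, hq'⟩
    exact ⟨q, Slice.mem_states.2 ⟨i, hi, hq⟩, hs.idx_eq hi hq, hq'⟩
  · rintro ⟨q, hq, rfl, hq'⟩
    exact ⟨q, hs.mem_S_idx hq, hq'⟩

theorem mem_hatS_two_mul {i : ℕ} {q : Q} :
    q ∈ hatS A s x (2 * i) ↔ q ∈ dTs A s (s.S i) x ∧ q ∉ A.F := by
  simp [hatS]

theorem mem_hatS_two_mul_sub_one {i : ℕ} (hi : 1 ≤ i) {q : Q} :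
    q ∈ hatS A s x (2 * i - 1) ↔ q ∈ dTs A s (s.S i) x ∧ q ∈ A.F := by
  have hodd : (2 * i - 1) % 2 = 1 := by lia
  have hhalf : (2 * i - 1 + 1) / 2 = i := by lia
  rw [hatS, if_pos hodd, hhalf, Set.mem_inter_iff]

theorem HatMem.exists_childPos_eq {h : ℕ} {q : Q} (hq : HatMem A s x h q) :
    ∃ i ∈ Set.Icc 1 s.n, q ∈ dTs A s (s.S i) x ∧ h = childPos A i q := by
  obtain ⟨⟨h1, hn⟩, hq⟩ := hq
  rcases Nat.even_or_odd' h with ⟨i, rfl | rfl⟩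
  · obtain ⟨hq, hF⟩ := mem_hatS_two_mul.1 hq
    exact ⟨i, ⟨by lia, by lia⟩, hq, (if_neg hF).symm⟩
  · obtain ⟨hq, hF⟩ := (mem_hatS_two_mul_sub_one (i := i + 1) (by lia)).1 hq
    exact ⟨i + 1, ⟨by lia, by lia⟩, hq, (if_pos hF).symm⟩

theorem hatMem_childPos {i : ℕ} {q : Q} (hi : i ∈ Set.Icc 1 s.n) (hq : q ∈ dTs A s (s.S i) x) :
    HatMem A s x (childPos A i q) q := by
  refine ⟨childPos_mem hi q, ?_⟩
  by_cases hF : q ∈ A.F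
  · rw [childPos, if_pos hF, mem_hatS_two_mul_sub_one hi.1]
    exact ⟨hq, hF⟩
  · rw [childPos, if_neg hF, mem_hatS_two_mul]
    exact ⟨hq, hF⟩

theorem HatMem.exists_pred (hs : s.Valid) {h : ℕ} {q' : Q} (hq' : HatMem A s x h q') :
    ∃ q ∈ s.states, q' ∈ A.delta q x ∧ h = childPos A (s.idx q) q' := by
  obtain ⟨i, hi, hq'i, rfl⟩ := hq'.exists_childPos_eq
  obtain ⟨q, hq, rfl, hqq'⟩ := (mem_dTs_S hs hi).1 hq'i
  exact ⟨q, hq, hqq'.1, rfl⟩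

theorem exists_mem_dT_of_mem_delta (hs : s.Valid) {q q' : Q} (hq : q ∈ s.states)
    (hqq' : q' ∈ A.delta q x) : ∃ p ∈ s.states, s.idx p ≤ s.idx q ∧ q' ∈ dT A s p x := by
  induction hi : s.idx q using Nat.strong_induction_on generalizing q with
  | _ i ih =>
    by_cases hleft : q' ∈ A.nextSet (⋃ j ∈ Set.Ico 1 (s.idx q), s.S j) x
    · simp only [NBA.nextSet, Set.mem_iUnion, exists_prop] at hleft
      obtain ⟨p, ⟨j, ⟨hj1, hj⟩, hpj⟩, hpq'⟩ := hleft
      have hjn : j ∈ Set.Icc 1 s.n := ⟨hj1, hj.le.trans (hs.idx_mem hq).2⟩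
      have hpidx : s.idx p = j := hs.idx_eq hjn hpj
      obtain ⟨p', hp', hle, hq'⟩ := ih j (hi ▸ hj) (Slice.mem_states.2 ⟨j, hjn, hpj⟩) hpq' hpidx
      exact ⟨p', hp', hle.trans (hi ▸ hj.le), hq'⟩
    · exact ⟨q, hq, hi.le, hqq', hleft⟩

theorem exists_hatMem_le_childPos (hs : s.Valid) {q q' : Q} (hq : q ∈ s.states)
    (hqq' : q' ∈ A.delta q x) : ∃ h, HatMem A s x h q' ∧ h ≤ childPos A (s.idx q) q' := by
  obtain ⟨p, hp, hle, hq'⟩ := exists_mem_dT_of_mem_delta hs hq hqq'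
  have hpq' := (mem_dTs_S hs (hs.idx_mem hp)).2 ⟨p, hp, rfl, hq'⟩
  exact ⟨_, hatMem_childPos (hs.idx_mem hp) hpq', childPos_mono q' hle⟩

theorem tildeRk_le {xs : ℕ → ℕ} {l h : ℕ} (hh : h ∈ Set.Ico (xs l) (xs (l + 1))) :
    tildeRk s xs l ≤ hatRk s h :=
  Nat.sInf_le ⟨h, hh, rfl⟩

theorem exists_hatRk_eq_tildeRk {xs : ℕ → ℕ} {l : ℕ} (hl : xs l < xs (l + 1)) :
    ∃ h ∈ Set.Ico (xs l) (xs (l + 1)), hatRk s h = tildeRk s xs l :=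
  Nat.sInf_mem ((Set.nonempty_Ico.2 hl).image (hatRk s))

namespace IsPrune

variable {nt : ℕ} {xs : ℕ → ℕ}

theorem strictMonoOn (hp : IsPrune A s x nt xs) : StrictMonoOn xs (Set.Icc 1 (nt + 1)) := by
  intro i hi j hj hij
  rcases hj.2.lt_or_eq with hjn | rfl
  · exact hp.1 ⟨hi.1, by lia⟩ ⟨hj.1, by lia⟩ hij
  · rw [hp.2.2.2]
    exact Nat.lt_succ_of_le (hp.2.1 i ⟨hi.1, by lia⟩).1.2

theorem lt_succ (hp : IsPrune A s x nt xs) {l : ℕ} (hl : l ∈ Set.Icc 1 nt) : xs l < xs (l + 1) :=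
  hp.strictMonoOn ⟨hl.1, hl.2.trans nt.le_succ⟩ ⟨by lia, Nat.succ_le_succ hl.2⟩ l.lt_succ_self

theorem mem_Icc_of_mem_Ico (hp : IsPrune A s x nt xs) {l h : ℕ} (hl : l ∈ Set.Icc 1 nt)
    (hh : h ∈ Set.Ico (xs l) (xs (l + 1))) : h ∈ Set.Icc 1 (2 * s.n) := by
  refine ⟨(hp.2.1 l hl).1.1.trans hh.1, Nat.le_of_lt_succ (hh.2.trans_le ?_)⟩
  rw [Nat.succ_eq_add_one, ← hp.2.2.2]
  exact hp.strictMonoOn.monotoneOn ⟨by lia, Nat.succ_le_succ hl.2⟩ ⟨by lia, le_rfl⟩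
    (Nat.succ_le_succ hl.2)

theorem eq_of_mem_Ico (hp : IsPrune A s x nt xs) {l h : ℕ} (hl : l ∈ Set.Icc 1 nt)
    (hh : h ∈ Set.Ico (xs l) (xs (l + 1))) (hne : (hatS A s x h).Nonempty) : h = xs l := by
  obtain ⟨i, hi, rfl⟩ := hp.2.2.1 h (hp.mem_Icc_of_mem_Ico hl hh) hne
  have hi' : i ∈ Set.Icc 1 (nt + 1) := ⟨hi.1, hi.2.trans nt.le_succ⟩
  have hil : i < l + 1 :=
    (hp.strictMonoOn.lt_iff_lt hi' ⟨by lia, Nat.succ_le_succ hl.2⟩).1 hh.2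
  have hli : l ≤ i := (hp.strictMonoOn.le_iff_le ⟨hl.1, hl.2.trans nt.le_succ⟩ hi').1 hh.1
  rw [le_antisymm (Nat.le_of_lt_succ hil) hli]

end IsPrune

theorem domRank_le {G R : Set ℕ} {card r : ℕ} (hr : r ∈ G ∪ R) : domRank G R card ≤ r := by
  rw [domRank, if_pos ⟨r, hr⟩]
  exact Nat.sInf_le hr

theorem domRank_mem_or_eq (G R : Set ℕ) (card : ℕ) :
    domRank G R card ∈ G ∪ R ∨ domRank G R card = card + 1 := by
  rw [domRank]
  split_ifs with hne
  · exact .inl (Nat.sInf_mem hne)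
  · exact .inr rfl

end Step

/-- A transition of the unified construction out of a valid slice, together with the data of its
prune and merge stages. -/
structure Transition [Fintype Q] (A : NBA Q Alp) (s : Slice Q) (x : Alp) (s' : Slice Q)
    (pr : ℕ) where
  nt : ℕ
  xs : ℕ → ℕ
  b : ℕ → ℕ
  valid : s.Valid
  via : TransVia A s x s' pr nt xs s'.n b

theorem UnifiedTrans.nonempty_transition [Fintype Q] {A : NBA Q Alp} {s s' : Slice Q} {x : Alp}
    {pr : ℕ} (h : UnifiedTrans A s x s' pr) (hs : s.Valid) :
    Nonempty (Transition A s x s' pr) := by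
  obtain ⟨nt, xs, n', b, hvia⟩ := h
  obtain rfl : s'.n = n' := hvia.2.2.2.2.1
  exact ⟨⟨nt, xs, b, hs, hvia⟩⟩

namespace Transition

variable [Fintype Q] {A : NBA Q Alp} {s s' : Slice Q} {x : Alp} {pr : ℕ}
  (T : Transition A s x s' pr)

/-- The green ranks of a transition. -/
def green : Set ℕ := greenSet A s x T.nt T.xs

/-- The red ranks of a transition. -/
def red : Set ℕ := redSet s T.nt T.xs

/-- The dominating rank of a transition. -/
noncomputable def dom : ℕ := domRank T.green T.red (Fintype.card Q)

/-- The position of the step stage at which the `(j + 1)`-st block starts; for the last `j` it is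
`2 * s.n + 1`. -/
def cut (j : ℕ) : ℕ := T.xs (T.b j + 1)

/-- The positions of the step stage that prune and merge collapse into the `j`-th set of the
successor slice. Positions of empty sets before the first nonempty one belong to no block. -/
def block (j : ℕ) : Set ℕ := Set.Ico (T.cut (j - 1)) (T.cut j)

/-- The indices of the prune stage that are merged into the `j`-th set. -/
def interval (j : ℕ) : Set ℕ := Set.Icc (T.b (j - 1) + 1) (T.b j)

/-- The rank `α̌ j` of the merge stage. -/
noncomputable def blockRank (j : ℕ) : ℕ := sInf (tildeRk s T.xs '' T.interval j)

theorem prune : IsPrune A s x T.nt T.xs := T.via.1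

theorem b_zero : T.b 0 = 0 := T.via.2.1.1

theorem b_n : T.b s'.n = T.nt := T.via.2.1.2.1

theorem b_strictMonoOn : StrictMonoOn T.b (Set.Icc 0 s'.n) := T.via.2.1.2.2

theorem b_pred_lt {j : ℕ} (hj : j ∈ Set.Icc 1 s'.n) : T.b (j - 1) < T.b j :=
  T.b_strictMonoOn ⟨by lia, by have := hj.2; lia⟩ ⟨by lia, hj.2⟩ (by have := hj.1; lia)

theorem b_le {j : ℕ} (hj : j ≤ s'.n) : T.b j ≤ T.nt :=
  T.b_n ▸ T.b_strictMonoOn.monotoneOn ⟨by lia, hj⟩ ⟨by lia, le_rfl⟩ hj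

theorem valid' (T : Transition A s x s' pr) : s'.Valid := T.via.2.2.2.2.2.2.1

theorem S_eq {j : ℕ} (hj : j ∈ Set.Icc 1 s'.n) :
    s'.S j = ⋃ l ∈ T.interval j, hatS A s x (T.xs l) :=
  T.via.2.2.2.2.2.1 j hj

theorem rk_lt_rk {i j : ℕ} (hi : i ∈ Set.Icc 1 s'.n) (hj : j ∈ Set.Icc 1 s'.n)
    (hij : T.blockRank i < T.blockRank j) : s'.rk i < s'.rk j :=
  T.via.2.2.2.2.2.2.2 i hi j hj hij

theorem eq_b_pred_succ_of_tildeRk_lt_dom {j l : ℕ} (hj : j ∈ Set.Icc 1 s'.n)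
    (hl : l ∈ T.interval j) (hlt : tildeRk s T.xs l < T.dom) : T.b j = T.b (j - 1) + 1 :=
  (T.via.2.2.1 j hj l hl).1 hlt

theorem eq_b_of_tildeRk_eq_dom {j l : ℕ} (hj : j ∈ Set.Icc 1 s'.n)
    (hl : l ∈ T.interval j) (heq : tildeRk s T.xs l = T.dom) : l = T.b j :=
  (T.via.2.2.1 j hj l hl).2 heq

theorem priority_cases :
    T.dom ∈ T.green ∧ pr = 2 * T.dom ∨ T.dom ∉ T.green ∧ pr = 2 * T.dom - 1 :=
  T.via.2.2.2.1

theorem interval_subset {j : ℕ} (hj : j ∈ Set.Icc 1 s'.n) :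
    T.interval j ⊆ Set.Icc 1 T.nt := fun _ hl =>
  ⟨(Nat.succ_pos _).trans_le hl.1, hl.2.trans (T.b_le hj.2)⟩

theorem exists_mem_interval {l : ℕ} (hl : l ∈ Set.Icc 1 T.nt) :
    ∃ j ∈ Set.Icc 1 s'.n, l ∈ T.interval j := by
  obtain ⟨h1, hn⟩ := hl
  obtain ⟨j, hj, hlj⟩ := exists_mem_Ico_pred (f := T.b) (n := s'.n) (x := l - 1)
    (by rw [T.b_zero]; lia) (by rw [T.b_n]; lia)
  exact ⟨j, hj, by have := hlj.1; lia, by have := hlj.2; lia⟩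

theorem cut_strictMonoOn : StrictMonoOn T.cut (Set.Icc 0 s'.n) := fun i hi j hj hij =>
  T.prune.strictMonoOn ⟨by lia, Nat.succ_le_succ (T.b_le hi.2)⟩
    ⟨by lia, Nat.succ_le_succ (T.b_le hj.2)⟩ (Nat.succ_lt_succ (T.b_strictMonoOn hi hj hij))

theorem cut_n : T.cut s'.n = 2 * s.n + 1 := by
  rw [cut, T.b_n, T.prune.2.2.2]

theorem Ico_subset_block {j l : ℕ} (hj : j ∈ Set.Icc 1 s'.n) (hl : l ∈ T.interval j) :
    Set.Ico (T.xs l) (T.xs (l + 1)) ⊆ T.block j := by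
  have hlt := T.interval_subset hj hl
  have hbj : T.b j ≤ T.nt := T.b_le hj.2
  obtain ⟨hjl, hlj⟩ := hl
  have hmono := T.prune.strictMonoOn.monotoneOn
  exact Set.Ico_subset_Ico (hmono ⟨by lia, by lia⟩ ⟨hlt.1, by lia⟩ hjl)
    (hmono ⟨by lia, by lia⟩ ⟨by lia, by lia⟩ (by lia))

theorem exists_mem_Ico_of_mem_block {j h : ℕ} (hj : j ∈ Set.Icc 1 s'.n) (hh : h ∈ T.block j) :
    ∃ l ∈ T.interval j, h ∈ Set.Ico (T.xs l) (T.xs (l + 1)) := by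
  have hb := T.b_pred_lt hj
  obtain ⟨i, ⟨h1, hi⟩, hhi⟩ := exists_mem_Ico_pred (f := fun i => T.xs (T.b (j - 1) + 1 + i))
    (n := T.b j - T.b (j - 1)) hh.1
    (by rw [show T.b (j - 1) + 1 + (T.b j - T.b (j - 1)) = T.b j + 1 by lia]; exact hh.2)
  refine ⟨T.b (j - 1) + i, ⟨by lia, by lia⟩, ?_⟩
  rwa [show T.b (j - 1) + 1 + (i - 1) = T.b (j - 1) + i by lia, add_right_comm] at hhi

theorem block_subset {j : ℕ} (hj : j ∈ Set.Icc 1 s'.n) : T.block j ⊆ Set.Icc 1 (2 * s.n) := by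
  intro h hh
  obtain ⟨l, hl, hlh⟩ := T.exists_mem_Ico_of_mem_block hj hh
  exact T.prune.mem_Icc_of_mem_Ico (T.interval_subset hj hl) hlh

theorem block_le_block {i j h h' : ℕ} (hi : i ∈ Set.Icc 1 s'.n) (hh : h ∈ T.block i)
    (hh' : h' ∈ T.block j) (hle : h ≤ h') : i ≤ j :=
  le_of_mem_Ico_pred T.cut_strictMonoOn.monotoneOn hi.2 hh hh' hle

theorem exists_mem_block {h : ℕ} (h0 : T.cut 0 ≤ h) (hn : h ≤ 2 * s.n) :
    ∃ j ∈ Set.Icc 1 s'.n, h ∈ T.block j :=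
  exists_mem_Ico_pred h0 (by rw [T.cut_n]; exact Nat.lt_succ_of_le hn)

theorem mem_S_iff {j : ℕ} (hj : j ∈ Set.Icc 1 s'.n) {q : Q} :
    q ∈ s'.S j ↔ ∃ h ∈ T.block j, HatMem A s x h q := by
  simp only [T.S_eq hj, Set.mem_iUnion, exists_prop]
  constructor
  · rintro ⟨l, hl, hq⟩
    have hlnt := T.interval_subset hj hl
    exact ⟨T.xs l, T.Ico_subset_block hj hl ⟨le_rfl, T.prune.lt_succ hlnt⟩,
      (T.prune.2.1 l hlnt).1, hq⟩
  · rintro ⟨h, hh, -, hq⟩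
    obtain ⟨l, hl, hlh⟩ := T.exists_mem_Ico_of_mem_block hj hh
    obtain rfl := T.prune.eq_of_mem_Ico (T.interval_subset hj hl) hlh ⟨q, hq⟩
    exact ⟨l, hl, hq⟩

theorem idx_mem_and_mem_block {h : ℕ} {q : Q} (hq : HatMem A s x h q) :
    s'.idx q ∈ Set.Icc 1 s'.n ∧ h ∈ T.block (s'.idx q) := by
  obtain ⟨i, hi, rfl⟩ := T.prune.2.2.1 h hq.1 ⟨q, hq.2⟩
  obtain ⟨j, hj, hij⟩ := T.exists_mem_interval hi
  have hblock := T.Ico_subset_block hj hij ⟨le_rfl, T.prune.lt_succ hi⟩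
  rw [T.valid'.idx_eq hj ((T.mem_S_iff hj).2 ⟨_, hblock, hq⟩)]
  exact ⟨hj, hblock⟩

theorem cut_zero_le {h : ℕ} {q : Q} (hq : HatMem A s x h q) : T.cut 0 ≤ h := by
  obtain ⟨hj, hh⟩ := T.idx_mem_and_mem_block hq
  exact (T.cut_strictMonoOn.monotoneOn ⟨le_rfl, Nat.zero_le _⟩
    ⟨Nat.zero_le _, (Nat.sub_le _ _).trans hj.2⟩ (Nat.zero_le _)).trans hh.1

theorem mem_states_of_hatMem (T : Transition A s x s' pr) {h : ℕ} {q : Q}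
    (hq : HatMem A s x h q) : q ∈ s'.states := by
  obtain ⟨hj, hh⟩ := T.idx_mem_and_mem_block hq
  exact Slice.mem_states.2 ⟨_, hj, (T.mem_S_iff hj).2 ⟨h, hh, hq⟩⟩

theorem exists_hatMem_of_mem_states (T : Transition A s x s' pr) {q : Q}
    (hq : q ∈ s'.states) : ∃ h, HatMem A s x h q := by
  obtain ⟨j, hj, hqj⟩ := Slice.mem_states.1 hq
  obtain ⟨h, -, hh⟩ := (T.mem_S_iff hj).1 hqj
  exact ⟨h, hh⟩

theorem idx_le_idx (T : Transition A s x s' pr) {h h' : ℕ} {q q' : Q}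
    (hq : HatMem A s x h q) (hq' : HatMem A s x h' q') (hle : h ≤ h') : s'.idx q ≤ s'.idx q' :=
  T.block_le_block (T.idx_mem_and_mem_block hq).1 (T.idx_mem_and_mem_block hq).2
    (T.idx_mem_and_mem_block hq').2 hle

theorem blockRank_le_tildeRk {j l : ℕ} (hl : l ∈ T.interval j) :
    T.blockRank j ≤ tildeRk s T.xs l :=
  Nat.sInf_le ⟨l, hl, rfl⟩

theorem exists_tildeRk_eq_blockRank {j : ℕ} (hj : j ∈ Set.Icc 1 s'.n) :
    ∃ l ∈ T.interval j, tildeRk s T.xs l = T.blockRank j :=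
  Nat.sInf_mem ((Set.nonempty_Icc.2 (T.b_pred_lt hj)).image _)

theorem blockRank_le_hatRk {j h : ℕ} (hj : j ∈ Set.Icc 1 s'.n) (hh : h ∈ T.block j) :
    T.blockRank j ≤ hatRk s h := by
  obtain ⟨l, hl, hlh⟩ := T.exists_mem_Ico_of_mem_block hj hh
  exact (T.blockRank_le_tildeRk hl).trans (tildeRk_le hlh)

theorem exists_hatRk_eq_blockRank {j : ℕ} (hj : j ∈ Set.Icc 1 s'.n) :
    ∃ h ∈ T.block j, hatRk s h = T.blockRank j := by
  obtain ⟨l, hl, hrk⟩ := T.exists_tildeRk_eq_blockRank hj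
  obtain ⟨h, hh, hrkh⟩ := exists_hatRk_eq_tildeRk (T.prune.lt_succ (T.interval_subset hj hl))
  exact ⟨h, T.Ico_subset_block hj hl hh, hrkh.trans hrk⟩

theorem blockRank_notMem_red {j : ℕ} (hj : j ∈ Set.Icc 1 s'.n) : T.blockRank j ∉ T.red := by
  obtain ⟨l, hl, hrk⟩ := T.exists_tildeRk_eq_blockRank hj
  exact fun hred => hred.2 ⟨l, T.interval_subset hj hl, hrk⟩

theorem one_le_blockRank {j : ℕ} (hj : j ∈ Set.Icc 1 s'.n) : 1 ≤ T.blockRank j := by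
  obtain ⟨h, hh, hrk⟩ := T.exists_hatRk_eq_blockRank hj
  exact hrk ▸ (hatRk_mem T.valid (T.block_subset hj hh)).1

theorem two_mul_pos_blockRank_mem_block {j : ℕ} (hj : j ∈ Set.Icc 1 s'.n)
    (hn : T.blockRank j ≤ s.n) : 2 * s.pos (T.blockRank j) ∈ T.block j := by
  obtain ⟨h, hh, hrk⟩ := T.exists_hatRk_eq_blockRank hj
  rwa [← hrk, ← hat_eq_two_mul_pos T.valid (T.block_subset hj hh) (hrk.trans_le hn)]

theorem blockRank_injOn {j : ℕ} (hn : T.blockRank j ≤ s.n) :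
    Set.InjOn T.blockRank {i ∈ Set.Icc 1 s'.n | T.blockRank i ≤ T.blockRank j} := by
  intro i hi k hk hik
  have hmemi := T.two_mul_pos_blockRank_mem_block hi.1 (hi.2.trans hn)
  have hmemk := T.two_mul_pos_blockRank_mem_block hk.1 (hk.2.trans hn)
  rw [hik] at hmemi
  exact le_antisymm (T.block_le_block hi.1 hmemi hmemk le_rfl)
    (T.block_le_block hk.1 hmemk hmemi le_rfl)

theorem rk_eq_ncard {j : ℕ} (hj : j ∈ Set.Icc 1 s'.n) (hn : T.blockRank j ≤ s.n) :
    s'.rk j = (T.blockRank '' Set.Icc 1 s'.n ∩ Set.Iic (T.blockRank j)).ncard :=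
  rank_eq_ncard T.valid'.bijOn_rk (fun _ hi _ hk => T.rk_lt_rk hi hk) hj (T.blockRank_injOn hn)

theorem rk_le_ncard_diff_red {c j : ℕ} (hc : c ∈ Set.Icc 1 s.n) (hj : j ∈ Set.Icc 1 s'.n)
    (hcj : 2 * c ∈ T.block j) : s'.rk j ≤ (Set.Icc 1 (s.rk c) \ T.red).ncard := by
  have hle : T.blockRank j ≤ s.rk c := hatRk_two_mul (s := s) c ▸ T.blockRank_le_hatRk hj hcj
  rw [T.rk_eq_ncard hj (hle.trans (T.valid.rk_mem hc).2)]
  refine Set.ncard_le_ncard ?_ ((Set.finite_Icc _ _).sdiff)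
  rintro _ ⟨⟨i, hi, rfl⟩, hij⟩
  exact ⟨⟨T.one_le_blockRank hi, le_trans hij hle⟩, T.blockRank_notMem_red hi⟩

theorem rk_le_rk {c j : ℕ} (hc : c ∈ Set.Icc 1 s.n) (hj : j ∈ Set.Icc 1 s'.n)
    (hcj : 2 * c ∈ T.block j) : s'.rk j ≤ s.rk c :=
  calc s'.rk j ≤ (Set.Icc 1 (s.rk c) \ T.red).ncard := T.rk_le_ncard_diff_red hc hj hcj
    _ ≤ (Set.Icc 1 (s.rk c)).ncard := Set.ncard_le_ncard Set.sdiff_subset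
    _ = s.rk c := by simp

theorem rk_lt_rk_of_mem_red {c j r : ℕ} (hc : c ∈ Set.Icc 1 s.n) (hj : j ∈ Set.Icc 1 s'.n)
    (hcj : 2 * c ∈ T.block j) (hr : r ∈ T.red) (hrc : r ≤ s.rk c) : s'.rk j < s.rk c := by
  have hr1 : 1 ≤ r := by
    obtain ⟨⟨h, hh, rfl⟩, -⟩ := hr
    exact (hatRk_mem T.valid hh).1
  calc s'.rk j ≤ (Set.Icc 1 (s.rk c) \ T.red).ncard := T.rk_le_ncard_diff_red hc hj hcj
    _ < (Set.Icc 1 (s.rk c)).ncard := by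
      refine Set.ncard_lt_ncard ⟨Set.sdiff_subset, fun hsub => ?_⟩
      exact (hsub ⟨hr1, hrc⟩).2 hr
    _ = s.rk c := by simp

theorem notMem_red_of_mem_green {r : ℕ} (hr : r ∈ T.green) : r ∉ T.red := fun hred => hred.2 hr.1

theorem mem_Icc_of_mem_green_union_red {r : ℕ} (hr : r ∈ T.green ∪ T.red) :
    r ∈ Set.Icc 1 (s.n + 1) := by
  rcases hr with ⟨-, h, hh, -, rfl⟩ | ⟨⟨h, hh, rfl⟩, -⟩ <;> exact hatRk_mem T.valid hh

theorem dom_le {r : ℕ} (hr : r ∈ T.green ∪ T.red) : T.dom ≤ r := domRank_le hr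

theorem one_le_dom : 1 ≤ T.dom := by
  rcases domRank_mem_or_eq T.green T.red (Fintype.card Q) with h | h
  · exact (T.mem_Icc_of_mem_green_union_red h).1
  · exact h.ge.trans' (Nat.succ_pos _)

theorem dom_le_card_succ : T.dom ≤ Fintype.card Q + 1 := by
  rcases domRank_mem_or_eq T.green T.red (Fintype.card Q) with h | h
  · exact (T.mem_Icc_of_mem_green_union_red h).2.trans (Nat.succ_le_succ T.valid.n_le_card)
  · exact h.le

theorem priority_le (T : Transition A s x s' pr) : pr ≤ 2 * (Fintype.card Q + 1) := by
  have := T.dom_le_card_succ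
  rcases T.priority_cases with ⟨-, h⟩ | ⟨-, h⟩ <;> lia

theorem dom_mem_red_of_notMem_green (hle : T.dom ≤ Fintype.card Q) (hgreen : T.dom ∉ T.green) :
    T.dom ∈ T.red := by
  rcases domRank_mem_or_eq T.green T.red (Fintype.card Q) with h | h
  · exact h.resolve_left hgreen
  · exact absurd (h.ge.trans hle) (Nat.not_succ_le_self _)

/-- The rank `r` of the slice `s` survives the transition: it is not red and no active rank is
smaller. The rank `r` then still exists in `s'`, and its position is a barrier that states of the
slice to the right of `s.pos r` do not cross. -/
structure Survives (r : ℕ) : Prop where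
  mem : r ∈ Set.Icc 1 s.n
  le_dom : r ≤ T.dom
  notMem_red : r ∉ T.red

theorem survives_of_lt_dom {r : ℕ} (hr : r ∈ Set.Icc 1 s.n) (hlt : r < T.dom) : T.Survives r :=
  ⟨hr, hlt.le, fun hred => (T.dom_le (.inr hred)).not_gt hlt⟩

theorem exists_blockRank_eq {l : ℕ} (hl : l ∈ Set.Icc 1 T.nt) (hle : tildeRk s T.xs l ≤ T.dom) :
    ∃ j ∈ Set.Icc 1 s'.n, l = T.b j ∧ T.blockRank j = tildeRk s T.xs l := by
  obtain ⟨j, hj, hlj⟩ := T.exists_mem_interval hl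
  have hlast : l = T.b j := by
    rcases hle.lt_or_eq with hlt | heq
    · have := T.eq_b_pred_succ_of_tildeRk_lt_dom hj hlj hlt
      exact le_antisymm hlj.2 (this ▸ hlj.1)
    · exact T.eq_b_of_tildeRk_eq_dom hj hlj heq
  refine ⟨j, hj, hlast, ?_⟩
  obtain ⟨l', hl', hmin⟩ := T.exists_tildeRk_eq_blockRank hj
  rcases (T.blockRank_le_tildeRk hlj).lt_or_eq with hlt | heq
  · have hsingle := T.eq_b_pred_succ_of_tildeRk_lt_dom hj hl' (hmin ▸ hlt.trans_le hle)
    have : l' = l := by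
      rw [hlast]
      exact le_antisymm hl'.2 (hsingle ▸ hl'.1)
    rw [← hmin, this]
  · exact heq

namespace Survives

variable {T} {r : ℕ}

theorem mono (hr : T.Survives r) {k : ℕ} (h1 : 1 ≤ k) (hkr : k ≤ r) : T.Survives k := by
  rcases hkr.lt_or_eq with hlt | rfl
  · exact T.survives_of_lt_dom ⟨h1, hkr.trans hr.mem.2⟩ (hlt.trans_le hr.le_dom)
  · exact hr

theorem exists_blockRank_eq (hr : T.Survives r) :
    ∃ j ∈ Set.Icc 1 s'.n, T.blockRank j = r ∧ tildeRk s T.xs (T.b j) = r := by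
  obtain ⟨l, hl, rfl⟩ : ∃ l ∈ Set.Icc 1 T.nt, tildeRk s T.xs l = r := by
    by_contra hne
    refine hr.notMem_red ⟨⟨2 * s.pos r, two_mul_mem (T.valid.pos_mem hr.mem), ?_⟩, hne⟩
    rw [hatRk_two_mul, T.valid.rk_pos hr.mem]
  obtain ⟨j, hj, rfl, hrk⟩ := T.exists_blockRank_eq hl hr.le_dom
  exact ⟨j, hj, hrk, rfl⟩

theorem rk_eq (hr : T.Survives r) {j : ℕ} (hj : j ∈ Set.Icc 1 s'.n) (hjr : T.blockRank j = r) :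
    s'.rk j = r := by
  have hall : T.blockRank '' Set.Icc 1 s'.n ∩ Set.Iic r = Set.Icc 1 r := by
    ext k
    constructor
    · rintro ⟨⟨i, hi, rfl⟩, hk⟩
      exact ⟨T.one_le_blockRank hi, hk⟩
    · rintro ⟨h1, hkr⟩
      obtain ⟨i, hi, hik, -⟩ := (hr.mono h1 hkr).exists_blockRank_eq
      exact ⟨⟨i, hi, hik⟩, hkr⟩
  rw [T.rk_eq_ncard hj (hjr.trans_le hr.mem.2), hjr, hall, Set.ncard_Icc_nat, Nat.add_sub_cancel]

theorem tildeRk_b_pos (hr : T.Survives r) :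
    r ∈ Set.Icc 1 s'.n ∧ tildeRk s T.xs (T.b (s'.pos r)) = r := by
  obtain ⟨j, hj, hjr, htilde⟩ := hr.exists_blockRank_eq
  obtain rfl : s'.rk j = r := hr.rk_eq hj hjr
  exact ⟨T.valid'.rk_mem hj, by rwa [T.valid'.pos_rk hj]⟩

theorem mem' (hr : T.Survives r) : r ∈ Set.Icc 1 s'.n := hr.tildeRk_b_pos.1

theorem pos_mem' (hr : T.Survives r) : s'.pos r ∈ Set.Icc 1 s'.n := T.valid'.pos_mem hr.mem'

theorem b_pos_mem_interval (hr : T.Survives r) : T.b (s'.pos r) ∈ T.interval (s'.pos r) :=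
  ⟨T.b_pred_lt hr.pos_mem', le_rfl⟩

theorem two_mul_pos_mem_Ico (hr : T.Survives r) :
    2 * s.pos r ∈ Set.Ico (T.xs (T.b (s'.pos r))) (T.cut (s'.pos r)) := by
  have hl := T.interval_subset hr.pos_mem' hr.b_pos_mem_interval
  obtain ⟨h, hh, hrk⟩ := exists_hatRk_eq_tildeRk (s := s) (T.prune.lt_succ hl)
  rw [hr.tildeRk_b_pos.2] at hrk
  have hpos := hat_eq_two_mul_pos T.valid (T.prune.mem_Icc_of_mem_Ico hl hh)
    (hrk.trans_le hr.mem.2)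
  rw [hrk] at hpos
  exact hpos ▸ hh

theorem two_mul_pos_mem_block (hr : T.Survives r) : 2 * s.pos r ∈ T.block (s'.pos r) :=
  T.Ico_subset_block hr.pos_mem' hr.b_pos_mem_interval hr.two_mul_pos_mem_Ico

theorem pos_lt_idx (hr : T.Survives r) {h : ℕ} {q : Q} (hq : HatMem A s x h q)
    (hlt : 2 * s.pos r < h) : s'.pos r < s'.idx q := by
  obtain ⟨-, hh⟩ := T.idx_mem_and_mem_block hq
  refine (T.block_le_block hr.pos_mem' hr.two_mul_pos_mem_block hh hlt.le).lt_of_ne fun heq => ?_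
  rw [← heq] at hh
  have hge := hr.two_mul_pos_mem_Ico.1
  exact (hge.trans_lt hlt).ne' <| T.prune.eq_of_mem_Ico
    (T.interval_subset hr.pos_mem' hr.b_pos_mem_interval) ⟨hge.trans hlt.le, hh.2⟩ ⟨q, hq.2⟩

theorem idx_le_pos (hr : T.Survives r) {h : ℕ} {q : Q} (hq : HatMem A s x h q)
    (hle : h ≤ 2 * s.pos r) : s'.idx q ≤ s'.pos r := by
  obtain ⟨hj, hh⟩ := T.idx_mem_and_mem_block hq
  exact T.block_le_block hj hh hr.two_mul_pos_mem_block hle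

/-- An empty right child of `s.pos r` would make `r` green, hence active, and below the dominating
rank merge leaves the interval of `r` a singleton. -/
theorem cut_pred_pos (hr : T.Survives r) (hlt : r < T.dom) :
    T.cut (s'.pos r - 1) = 2 * s.pos r := by
  have htilde := hr.tildeRk_b_pos.2
  have hl := T.interval_subset hr.pos_mem' hr.b_pos_mem_interval
  have hne : (hatS A s x (2 * s.pos r)).Nonempty := by
    refine Set.nonempty_iff_ne_empty.2 fun hempty => (T.dom_le (.inl ?_)).not_gt hlt
    exact ⟨⟨_, hl, htilde⟩, _, two_mul_mem (T.valid.pos_mem hr.mem), hempty,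
      by rw [hatRk_two_mul, T.valid.rk_pos hr.mem]⟩
  rw [T.prune.eq_of_mem_Ico hl hr.two_mul_pos_mem_Ico hne, cut,
    ← T.eq_b_pred_succ_of_tildeRk_lt_dom hr.pos_mem' hr.b_pos_mem_interval (htilde.trans_lt hlt)]

theorem lt_pos (hr : T.Survives r) (hlt : r < T.dom) {j h : ℕ} (hj : j ∈ Set.Icc 1 s'.n)
    (hh : h ∈ T.block j) (hhr : h < 2 * s.pos r) : j < s'.pos r := by
  refine (T.block_le_block hj hh hr.two_mul_pos_mem_block hhr.le).lt_of_ne ?_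
  rintro rfl
  exact (hh.1.trans_lt hhr).ne (hr.cut_pred_pos hlt)

theorem idx_le_pos_of_mem_delta (hr : T.Survives r) {q q' : Q} (hq : q ∈ s.states)
    (hqq' : q' ∈ A.delta q x) (hle : s.idx q ≤ s.pos r) : s'.idx q' ≤ s'.pos r := by
  obtain ⟨h, hh, hchild⟩ := exists_hatMem_le_childPos T.valid hq hqq'
  have := childPos_le_two_mul (A := A) (s.idx q) q'
  exact hr.idx_le_pos hh (by lia)

theorem idx_lt_pos_of_mem_delta (hr : T.Survives r) (hlt : r < T.dom) {q q' : Q}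
    (hq : q ∈ s.states) (hqq' : q' ∈ A.delta q x)
    (hchild : childPos A (s.idx q) q' < 2 * s.pos r) : s'.idx q' < s'.pos r := by
  obtain ⟨h, hh, hle⟩ := exists_hatMem_le_childPos T.valid hq hqq'
  obtain ⟨hj, hblock⟩ := T.idx_mem_and_mem_block hh
  exact hr.lt_pos hlt hj hblock (hle.trans_lt hchild)

end Survives

theorem mem_states_of_mem_delta (T : Transition A s x s' pr) {q q' : Q} (hq : q ∈ s.states)
    (hqq' : q' ∈ A.delta q x) : q' ∈ s'.states := by
  obtain ⟨h, hh, -⟩ := exists_hatMem_le_childPos T.valid hq hqq'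
  exact T.mem_states_of_hatMem hh

theorem exists_block_of_idx_le {q q' : Q} (hq : q ∈ s.states) (hqq' : q' ∈ A.delta q x) {c : ℕ}
    (hc : c ≤ s.n) (hle : s.idx q ≤ c) :
    ∃ j ∈ Set.Icc 1 s'.n, 2 * c ∈ T.block j ∧ s'.idx q' ≤ j := by
  obtain ⟨h, hh, hchild⟩ := exists_hatMem_le_childPos T.valid hq hqq'
  have hhc : h ≤ 2 * c := by
    have := childPos_le_two_mul (A := A) (s.idx q) q'
    lia
  obtain ⟨j, hj, hcj⟩ := T.exists_mem_block ((T.cut_zero_le hh).trans hhc)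
    (Nat.mul_le_mul_left 2 hc)
  obtain ⟨hidx, hblock⟩ := T.idx_mem_and_mem_block hh
  exact ⟨j, hj, hcj, T.block_le_block hidx hblock hcj hhc⟩

theorem hatS_two_mul_pos_eq_empty {r : ℕ} (hr : r ∈ T.green) (hn : r ≤ s.n) :
    hatS A s x (2 * s.pos r) = ∅ := by
  obtain ⟨-, h, hh, hempty, rfl⟩ := hr
  rwa [← hat_eq_two_mul_pos T.valid hh hn]

theorem dom_le_n_of_mem_green (hgreen : T.dom ∈ T.green) : T.dom ≤ s'.n := by
  have ⟨⟨l, hl, hrk⟩, _⟩ := hgreen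
  obtain ⟨j, hj, -, hjdom⟩ := T.exists_blockRank_eq hl hrk.le
  have hdom := T.mem_Icc_of_mem_green_union_red (.inl hgreen)
  rcases hdom.1.eq_or_lt with h1 | h1
  · exact h1 ▸ hj.1.trans hj.2
  · have hpred : T.Survives (T.dom - 1) := T.survives_of_lt_dom
      ⟨by lia, by have := hdom.2; lia⟩ (by lia)
    obtain ⟨i, hi, hik, -⟩ := hpred.exists_blockRank_eq
    have hlt : s'.rk i < s'.rk j := T.rk_lt_rk hi hj (by rw [hik, hjdom, hrk]; lia)
    rw [hpred.rk_eq hi hik] at hlt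
    have := (T.valid'.rk_mem hj).2
    lia

theorem le_dom_of_two_mul_sub_one_le {K : ℕ} (hK : 2 * K - 1 ≤ pr) : K ≤ T.dom := by
  have := T.one_le_dom
  rcases T.priority_cases with ⟨-, h⟩ | ⟨-, h⟩ <;> lia

theorem dom_eq_and_mem_green {K : ℕ} (hK : pr = 2 * K) : T.dom = K ∧ K ∈ T.green := by
  have := T.one_le_dom
  rcases T.priority_cases with ⟨hgreen, h⟩ | ⟨-, h⟩
  · obtain rfl : T.dom = K := by lia
    exact ⟨rfl, hgreen⟩
  · lia

theorem dom_eq_and_notMem_green {K : ℕ} (hK : pr = 2 * K + 1) :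
    T.dom = K + 1 ∧ K + 1 ∉ T.green := by
  have := T.one_le_dom
  rcases T.priority_cases with ⟨-, h⟩ | ⟨hgreen, h⟩
  · lia
  · obtain heq : T.dom = K + 1 := by lia
    exact ⟨heq, heq ▸ hgreen⟩

theorem notMem_red_of_two_mul_le {K : ℕ} (hK : 2 * K ≤ pr) : K ∉ T.red := by
  intro hred
  have heq : T.dom = K :=
    le_antisymm (T.dom_le (.inr hred)) (T.le_dom_of_two_mul_sub_one_le (by lia))
  rcases T.priority_cases with ⟨hgreen, -⟩ | ⟨-, h⟩
  · exact T.notMem_red_of_mem_green hgreen (heq ▸ hred)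
  · have := T.one_le_dom
    lia

end Transition

/-- A run of the unified construction on the word `w` with priorities `pr`, starting in the initial
states of `A`. -/
structure SliceRun [Fintype Q] (A : NBA Q Alp) (w : ℕ → Alp) (pr : ℕ → ℕ) where
  slice : ℕ → Slice Q
  states_zero : (slice 0).states = A.Q0
  trans : ∀ i, Transition A (slice i) (w i) (slice (i + 1)) (pr i)

namespace SliceRun

open Filter

variable [Fintype Q] {A : NBA Q Alp} {w : ℕ → Alp} {pr : ℕ → ℕ} (R : SliceRun A w pr)

section Soundness

/-- The successor `q'` of `q` is inherited from the set of `q` in the `i`-th slice. -/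
def Edge (i : ℕ) (q q' : Q) : Prop :=
  q ∈ (R.slice i).states ∧ q' ∈ A.delta q (w i) ∧
    HatMem A (R.slice i) (w i) (childPos A ((R.slice i).idx q) q') q'

theorem exists_edge (i : ℕ) (q' : Q) (hq' : q' ∈ (R.slice (i + 1)).states) :
    ∃ q, q ∈ (R.slice i).states ∧ R.Edge i q q' := by
  obtain ⟨h, hh⟩ := (R.trans i).exists_hatMem_of_mem_states hq'
  obtain ⟨q, hq, hqq', rfl⟩ := hh.exists_pred (R.trans i).valid
  exact ⟨q, hq, hq, hqq', hh⟩

variable {R}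

theorem Edge.idx_le_idx {i : ℕ} {p p' q q' : Q} (hp : R.Edge i p p') (hq : R.Edge i q q')
    (hF : q' ∉ A.F) (hle : (R.slice i).idx p ≤ (R.slice i).idx q) :
    (R.slice (i + 1)).idx p' ≤ (R.slice (i + 1)).idx q' := by
  refine (R.trans i).idx_le_idx hp.2.2 hq.2.2 ?_
  rw [childPos_eq_two_mul hF]
  exact (childPos_le_two_mul _ _).trans (Nat.mul_le_mul_left 2 hle)

theorem Edge.pos_lt_idx {i K : ℕ} {q q' : Q} (hq : R.Edge i q q') (hK : (R.trans i).Survives K)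
    (hlt : (R.slice i).pos K < (R.slice i).idx q) :
    (R.slice (i + 1)).pos K < (R.slice (i + 1)).idx q' := by
  have := two_mul_le_childPos_succ (A := A) ((R.slice i).idx q) q'
  exact hK.pos_lt_idx hq.2.2 (by lia)

theorem idx_le_pos_of_path {K i j : ℕ} (hK : ∀ k, i ≤ k → (R.trans k).Survives K) {q z : Q}
    (hp : TimedPath R.Edge i q j z) (hz : (R.slice j).idx z ≤ (R.slice j).pos K) :
    (R.slice i).idx q ≤ (R.slice i).pos K := by
  by_contra! hlt
  refine hz.not_gt (hp.preserves (P := fun k y => (R.slice k).pos K < (R.slice k).idx y) hlt ?_)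
  exact fun k hik _ _ _ hedge hk => hedge.pos_lt_idx (hK k hik) hk

theorem eventually_survives {K : ℕ} (hgreen : ∃ᶠ i in atTop, pr i = 2 * K)
    (hle : ∀ᶠ i in atTop, 2 * K ≤ pr i) : ∀ᶠ i in atTop, (R.trans i).Survives K := by
  have hsurv : ∀ i, 2 * K ≤ pr i → 1 ≤ K → K ≤ (R.slice i).n → (R.trans i).Survives K :=
    fun i hi h1 hn => ⟨⟨h1, hn⟩, (R.trans i).le_dom_of_two_mul_sub_one_le (by lia),
      (R.trans i).notMem_red_of_two_mul_le hi⟩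
  have h1 : 1 ≤ K := by
    obtain ⟨i, hi⟩ := hgreen.exists
    exact ((R.trans i).dom_eq_and_mem_green hi).1 ▸ (R.trans i).one_le_dom
  have hpersist : ∀ᶠ i in atTop, K ≤ (R.slice i).n → K ≤ (R.slice (i + 1)).n := by
    filter_upwards [hle] with i hi hn using (hsurv i hi h1 hn).mem'.2
  have hborn : ∃ᶠ i in atTop, K ≤ (R.slice (i + 1)).n := hgreen.mono fun i hi => by
    obtain ⟨hdom, hmem⟩ := (R.trans i).dom_eq_and_mem_green hi
    exact hdom ▸ (R.trans i).dom_le_n_of_mem_green (hdom ▸ hmem)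
  rcases eventually_or_eventually_not hpersist with hn | hn
  · filter_upwards [hle, hn] with i hi hni using hsurv i hi h1 hni
  · exact absurd ((tendsto_add_atTop_nat 1).eventually hn) hborn

theorem exists_mem_F_of_paths {K M : ℕ} (hK : ∀ k, M ≤ k → (R.trans k).Survives K) {ρ : ℕ → Q}
    (hρ : ∀ i, R.Edge i (ρ i) (ρ (i + 1)))
    (hpath : ∀ i, ∃ᶠ j in atTop, ∃ z, TimedPath R.Edge i (ρ i) j z ∧
      K ∈ (R.trans j).green ∧ (R.slice j).idx z = (R.slice j).pos K) :
    ∃ i ≥ M, ρ i ∈ A.F := by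
  by_contra! hF
  obtain ⟨j, z, hp, hgreen, hz⟩ := (hpath M).exists
  have hMj := hp.le
  have hle : (R.slice j).idx z ≤ (R.slice j).idx (ρ j) :=
    hp.preserves (P := fun k y => (R.slice k).idx y ≤ (R.slice k).idx (ρ k)) le_rfl
      fun k hk _ _ _ hedge h => hedge.idx_le_idx (hρ k) (hF _ (by lia)) h
  obtain ⟨_, _, hp', -, hz'⟩ := (hpath j).exists
  have hge := idx_le_pos_of_path (fun k hk => hK k (hMj.trans hk)) hp' hz'.le
  have hmem := (hρ j).2.2.2
  rw [childPos_eq_two_mul (hF _ (by lia)), le_antisymm hge (hz ▸ hle),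
    (R.trans j).hatS_two_mul_pos_eq_empty hgreen (hK j hMj).mem.2] at hmem
  exact hmem

theorem accepts_of_frequently_green {K : ℕ} (R : SliceRun A w pr)
    (hgreen : ∃ᶠ i in atTop, pr i = 2 * K) (hle : ∀ᶠ i in atTop, 2 * K ≤ pr i) :
    A.Accepts w := by
  have hsurv : ∀ᶠ i in atTop, (R.trans i).Survives K := eventually_survives hgreen hle
  have hsource : ∃ᶠ j in atTop, ∃ x, x ∈ (R.slice 0).states ∧ ∃ z, TimedPath R.Edge 0 x j z ∧
      K ∈ (R.trans j).green ∧ (R.slice j).idx z = (R.slice j).pos K := by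
    refine (hgreen.and_eventually hsurv).mono fun j ⟨hj, hKj⟩ => ?_
    have hpos := (R.trans j).valid.pos_mem hKj.mem
    obtain ⟨z, hz⟩ := (R.trans j).valid.1 _ hpos
    obtain ⟨x, hx, hp⟩ := TimedPath.exists_of_forall_exists_pred
      (V := fun i q => q ∈ (R.slice i).states) R.exists_edge (Slice.mem_states.2 ⟨_, hpos, hz⟩)
    exact ⟨x, hx, z, hp, ((R.trans j).dom_eq_and_mem_green hj).2,
      (R.trans j).valid.idx_eq hpos hz⟩
  obtain ⟨ρ, h0, hρ, hpath⟩ := TimedPath.exists_forall_frequently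
    (V := fun i q => q ∈ (R.slice i).states) hsource
  obtain ⟨M, hM⟩ := eventually_atTop.1 hsurv
  refine ⟨ρ, ⟨R.states_zero ▸ h0, fun i => (hρ i).2.1⟩, fun N => ?_⟩
  obtain ⟨i, hi, hF⟩ := exists_mem_F_of_paths (M := max M N)
    (fun k hk => hM k (le_of_max_le_left hk)) hρ hpath
  exact ⟨i, le_of_max_le_right hi, hF⟩

end Soundness

section Completeness

/-- Eventually, the rank `r` is present and the run `ρ` stays to the left of its position. -/
def IsRightBarrier (ρ : ℕ → Q) (r : ℕ) : Prop :=
  ∀ᶠ i in atTop, r ≤ (R.slice i).n ∧ (R.slice i).idx (ρ i) < (R.slice i).pos r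

/-- The positions from that of the run `ρ` up to the first right barrier of rank smaller than
`K`. -/
def window (ρ : ℕ → Q) (K i : ℕ) : Set ℕ :=
  {c ∈ Set.Icc 1 (R.slice i).n | (R.slice i).idx (ρ i) ≤ c ∧
    ∀ r ∈ Set.Ico 1 K, R.IsRightBarrier ρ r → c < (R.slice i).pos r}

/-- The least rank in the window. -/
noncomputable def windowRank (ρ : ℕ → Q) (K i : ℕ) : ℕ :=
  sInf ((R.slice i).rk '' R.window ρ K i)

variable {R} {ρ : ℕ → Q} {K : ℕ}

theorem mem_states_of_isRun (R : SliceRun A w pr) (hρ : A.IsRun w ρ) (i : ℕ) :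
    ρ i ∈ (R.slice i).states := by
  induction i with
  | zero => exact R.states_zero ▸ hρ.1
  | succ i ih => exact (R.trans i).mem_states_of_mem_delta ih (hρ.2 i)

theorem eventually_survives_or_eventually_lt (hK : ∀ᶠ i in atTop, K ≤ (R.trans i).dom) {r : ℕ}
    (hr : r ∈ Set.Ico 1 K) :
    (∀ᶠ i in atTop, (R.trans i).Survives r) ∨ ∀ᶠ i in atTop, (R.slice i).n < r := by
  have hpersist : ∀ᶠ i in atTop, r ≤ (R.slice i).n → r ≤ (R.slice (i + 1)).n := by
    filter_upwards [hK] with i hi hn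
    exact ((R.trans i).survives_of_lt_dom ⟨hr.1, hn⟩ (hr.2.trans_le hi)).mem'.2
  rcases eventually_or_eventually_not hpersist with hn | hn
  · left
    filter_upwards [hK, hn] with i hi hni
    exact (R.trans i).survives_of_lt_dom ⟨hr.1, hni⟩ (hr.2.trans_le hi)
  · right
    simpa only [not_le] using hn

/-- A run cannot sit on a stable position forever: visiting `F` pushes it to the left. -/
theorem isRightBarrier_or_eventually_pos_lt (hρ : A.IsRun w ρ) (hF : ∃ᶠ i in atTop, ρ i ∈ A.F)
    (hK : ∀ᶠ i in atTop, K ≤ (R.trans i).dom) {r : ℕ} (hr : r ∈ Set.Ico 1 K)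
    (hsurv : ∀ᶠ i in atTop, (R.trans i).Survives r) :
    R.IsRightBarrier ρ r ∨ ∀ᶠ i in atTop, (R.slice i).pos r < (R.slice i).idx (ρ i) := by
  have hρs := R.mem_states_of_isRun hρ
  have hstay : ∀ᶠ i in atTop, (R.slice i).idx (ρ i) < (R.slice i).pos r →
      (R.slice (i + 1)).idx (ρ (i + 1)) < (R.slice (i + 1)).pos r := by
    filter_upwards [hsurv, hK] with i hi hKi hlt
    have := childPos_le_two_mul (A := A) ((R.slice i).idx (ρ i)) (ρ (i + 1))
    exact hi.idx_lt_pos_of_mem_delta (hr.2.trans_le hKi) (hρs i) (hρ.2 i) (by lia)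
  have hstay' : ∀ᶠ i in atTop, (R.slice i).idx (ρ i) ≤ (R.slice i).pos r →
      (R.slice (i + 1)).idx (ρ (i + 1)) ≤ (R.slice (i + 1)).pos r := by
    filter_upwards [hsurv] with i hi hle using hi.idx_le_pos_of_mem_delta (hρs i) (hρ.2 i) hle
  rcases eventually_or_eventually_not hstay with hlt | hge
  · left
    filter_upwards [hsurv, hlt] with i hi hlti using ⟨hi.mem.2, hlti⟩
  rcases eventually_or_eventually_not hstay' with hle | hgt
  · have hF' : ∃ᶠ i in atTop, ρ (i + 1) ∈ A.F := by
      rwa [← map_add_atTop_eq_nat 1, frequently_map] at hF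
    obtain ⟨i, hFi, hi, hKi, hlei, hgei⟩ := (hF'.and_eventually (hsurv.and (hK.and
      (hle.and ((tendsto_add_atTop_nat 1).eventually hge))))).exists
    have hchild := childPos_lt_two_mul ((R.trans i).valid.idx_mem (hρs i)).1 hFi
    exact absurd (hi.idx_lt_pos_of_mem_delta (hr.2.trans_le hKi) (hρs i) (hρ.2 i) (by lia)) hgei
  · right
    simpa only [not_le] using hgt

theorem eventually_idx_mem_window (hρ : A.IsRun w ρ) :
    ∀ᶠ i in atTop, (R.slice i).idx (ρ i) ∈ R.window ρ K i := by
  have hall : ∀ᶠ i in atTop, ∀ r ∈ Set.Ico 1 K, R.IsRightBarrier ρ r →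
      (R.slice i).idx (ρ i) < (R.slice i).pos r := by
    refine (eventually_all_finite (Set.finite_Ico 1 K)).2 fun r _ => ?_
    by_cases hr : R.IsRightBarrier ρ r
    · exact hr.mono fun i hi _ => hi.2
    · exact Eventually.of_forall fun _ h => absurd h hr
  filter_upwards [hall] with i hi
  exact ⟨(R.trans i).valid.idx_mem (R.mem_states_of_isRun hρ i), le_rfl, hi⟩

theorem eventually_exists_mem_window_succ (hρ : A.IsRun w ρ)
    (hK : ∀ᶠ i in atTop, K ≤ (R.trans i).dom) :
    ∀ᶠ i in atTop, ∀ c ∈ R.window ρ K i,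
      ∃ j ∈ R.window ρ K (i + 1), 2 * c ∈ (R.trans i).block j := by
  have hall : ∀ᶠ i in atTop, ∀ r ∈ Set.Ico 1 K, R.IsRightBarrier ρ r → r ≤ (R.slice i).n := by
    refine (eventually_all_finite (Set.finite_Ico 1 K)).2 fun r _ => ?_
    by_cases hr : R.IsRightBarrier ρ r
    · exact hr.mono fun i hi _ => hi.1
    · exact Eventually.of_forall fun _ h => absurd h hr
  filter_upwards [hK, hall] with i hKi hi c ⟨hc, hac, hcr⟩
  obtain ⟨j, hj, hcj, haj⟩ :=
    (R.trans i).exists_block_of_idx_le (R.mem_states_of_isRun hρ i) (hρ.2 i) hc.2 hac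
  refine ⟨j, ⟨hj, haj, fun r hr hbar => ?_⟩, hcj⟩
  have hlt := hr.2.trans_le hKi
  have hsurv := (R.trans i).survives_of_lt_dom ⟨hr.1, hi r hr hbar⟩ hlt
  exact hsurv.lt_pos hlt hj hcj (by have := hcr r hr hbar; lia)

theorem eventually_le_rk_of_mem_window (hρ : A.IsRun w ρ) (hF : ∃ᶠ i in atTop, ρ i ∈ A.F)
    (hK : ∀ᶠ i in atTop, K ≤ (R.trans i).dom) :
    ∀ᶠ i in atTop, ∀ c ∈ R.window ρ K i, K ≤ (R.slice i).rk c := by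
  have hall : ∀ᶠ i in atTop, ∀ r ∈ Set.Ico 1 K, ∀ c ∈ R.window ρ K i, (R.slice i).rk c ≠ r := by
    refine (eventually_all_finite (Set.finite_Ico 1 K)).2 fun r hr => ?_
    rcases eventually_survives_or_eventually_lt hK hr with hsurv | hlt
    · rcases isRightBarrier_or_eventually_pos_lt hρ hF hK hr hsurv with hbar | hleft
      · refine Eventually.of_forall ?_
        rintro i c ⟨hc, -, hcr⟩ rfl
        exact (hcr _ hr hbar).ne' ((R.trans i).valid.pos_rk hc)
      · filter_upwards [hleft]
        rintro i hi c ⟨hc, hac, -⟩ rfl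
        exact hac.not_gt (((R.trans i).valid.pos_rk hc) ▸ hi)
    · filter_upwards [hlt]
      rintro i hi c ⟨hc, -⟩ rfl
      exact hi.not_ge ((R.trans i).valid.rk_mem hc).2
  filter_upwards [hall] with i hi c hc
  by_contra! hlt
  exact hi _ ⟨((R.trans i).valid.rk_mem hc.1).1, hlt⟩ c hc rfl

theorem windowRank_le {i j : ℕ} (hj : j ∈ R.window ρ K i) :
    R.windowRank ρ K i ≤ (R.slice i).rk j :=
  Nat.sInf_le ⟨j, hj, rfl⟩

theorem exists_rk_eq_windowRank {i : ℕ} (hne : (R.window ρ K i).Nonempty) :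
    ∃ c ∈ R.window ρ K i, (R.slice i).rk c = R.windowRank ρ K i :=
  Nat.sInf_mem (hne.image _)

theorem eventually_windowRank_succ_le (hρ : A.IsRun w ρ)
    (hK : ∀ᶠ i in atTop, K ≤ (R.trans i).dom) :
    ∀ᶠ i in atTop, R.windowRank ρ K (i + 1) ≤ R.windowRank ρ K i := by
  filter_upwards [eventually_idx_mem_window hρ, eventually_exists_mem_window_succ hρ hK]
    with i hi hstep
  obtain ⟨c, hc, hrk⟩ := exists_rk_eq_windowRank ⟨_, hi⟩
  obtain ⟨j, hj, hcj⟩ := hstep c hc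
  exact hrk ▸ (windowRank_le hj).trans ((R.trans i).rk_le_rk hc.1 hj.1 hcj)

theorem eventually_windowRank_succ_lt (hρ : A.IsRun w ρ) (hF : ∃ᶠ i in atTop, ρ i ∈ A.F)
    (hK : ∀ᶠ i in atTop, K ≤ (R.trans i).dom) :
    ∀ᶠ i in atTop, K ∈ (R.trans i).red → R.windowRank ρ K (i + 1) < R.windowRank ρ K i := by
  filter_upwards [eventually_idx_mem_window hρ, eventually_exists_mem_window_succ hρ hK,
    eventually_le_rk_of_mem_window hρ hF hK] with i hi hstep hle hred
  obtain ⟨c, hc, hrk⟩ := exists_rk_eq_windowRank ⟨_, hi⟩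
  obtain ⟨j, hj, hcj⟩ := hstep c hc
  exact hrk ▸ (windowRank_le hj).trans_lt
    ((R.trans i).rk_lt_rk_of_mem_red hc.1 hj.1 hcj hred (hle c hc))

theorem not_accepts_of_frequently_red (R : SliceRun A w pr)
    (hodd : ∃ᶠ i in atTop, pr i = 2 * K + 1) (hle : ∀ᶠ i in atTop, 2 * K + 1 ≤ pr i) :
    ¬ A.Accepts w := by
  rintro ⟨ρ, hρ, hvisit⟩
  have hF : ∃ᶠ i in atTop, ρ i ∈ A.F := frequently_atTop.2 hvisit
  have hK : ∀ᶠ i in atTop, K + 1 ≤ (R.trans i).dom :=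
    hle.mono fun i hi => (R.trans i).le_dom_of_two_mul_sub_one_le hi
  have hcard : ∀ᶠ _ : ℕ in atTop, K + 1 ≤ Fintype.card Q := by
    filter_upwards [eventually_idx_mem_window hρ, eventually_le_rk_of_mem_window hρ hF hK]
      with i hi hrk
    have hs := (R.trans i).valid
    exact (hrk _ hi).trans ((hs.rk_mem hi.1).2.trans hs.n_le_card)
  have hred : ∃ᶠ i in atTop, K + 1 ∈ (R.trans i).red := by
    refine (hodd.and_eventually hcard).mono fun i ⟨hi, hci⟩ => ?_
    obtain ⟨hdom, hgreen⟩ := (R.trans i).dom_eq_and_notMem_green hi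
    exact hdom ▸ (R.trans i).dom_mem_red_of_notMem_green (hdom ▸ hci) (hdom ▸ hgreen)
  exact not_frequently_lt_of_eventually_le (eventually_windowRank_succ_le hρ hK)
    ((hred.and_eventually (eventually_windowRank_succ_lt hρ hF hK)).mono fun _ ⟨hi, h⟩ => h hi)

end Completeness

theorem accepts_iff_even (R : SliceRun A w pr) {m : ℕ} (hm : ∃ᶠ i in atTop, pr i = m)
    (hle : ∀ᶠ i in atTop, m ≤ pr i) : A.Accepts w ↔ Even m := by
  rcases Nat.even_or_odd' m with ⟨K, rfl | rfl⟩
  · exact iff_of_true (R.accepts_of_frequently_green hm hle) (even_two_mul K)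
  · exact iff_of_false (R.not_accepts_of_frequently_red hm hle)
      (Nat.not_even_iff_odd.2 (odd_two_mul_add_one K))

end SliceRun

theorem TDPA.reachable_run {P : Type*} (B : TDPA P Alp) (w : ℕ → Alp) (i : ℕ) :
    B.Reachable (B.run w i) := by
  induction i with
  | zero => exact ⟨[], rfl⟩
  | succ i ih =>
    obtain ⟨l, hl⟩ := ih
    exact ⟨l ++ [w i], by rw [List.foldl_append, hl]; rfl⟩

theorem TDPA.accepts_iff_even {P : Type*} {B : TDPA P Alp} {w : ℕ → Alp} {m : ℕ}
    (hm : ∃ᶠ i in Filter.atTop, B.c (B.run w i) (w i) = m)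
    (hle : ∀ᶠ i in Filter.atTop, m ≤ B.c (B.run w i) (w i)) : B.Accepts w ↔ Even m := by
  have hmin : ∀ m', (∀ N, ∃ i, N ≤ i ∧ B.c (B.run w i) (w i) = m') → m ≤ m' := fun m' hm' => by
    have hfreq : ∃ᶠ i in Filter.atTop, B.c (B.run w i) (w i) = m' := Filter.frequently_atTop.2 hm'
    obtain ⟨_, rfl, hi⟩ := (hfreq.and_eventually hle).exists
    exact hi
  refine ⟨?_, fun heven => ⟨m, Filter.frequently_atTop.1 hm, hmin, heven⟩⟩
  rintro ⟨m', hm', hmin', heven⟩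
  rwa [(hmin m' hm').antisymm (hmin' m (Filter.frequently_atTop.1 hm))]

namespace ObtainedUnified

variable [Fintype Q] {A : NBA Q Alp} {B : TDPA (Slice Q) Alp}

theorem valid_p0 (hB : ObtainedUnified A B) (hQ0 : A.Q0.Nonempty) : B.p0.Valid := by
  obtain ⟨hn, hS, hrk, -⟩ := hB
  simp only [Slice.Valid, hn, Set.Icc_self, Set.mem_singleton_iff, forall_eq, hS, hrk]
  refine ⟨hQ0, by simp, ?_, by simp⟩
  rw [Set.bijOn_singleton, hrk]

theorem valid_run (hB : ObtainedUnified A B) (hQ0 : A.Q0.Nonempty) (w : ℕ → Alp) :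
    ∀ i, (B.run w i).Valid
  | 0 => hB.valid_p0 hQ0
  | i + 1 => by
    obtain ⟨_, _, _, _, hvia⟩ := hB.2.2.2 _ (B.reachable_run w i) (w i)
    exact hvia.2.2.2.2.2.2.1

theorem states_p0 (hB : ObtainedUnified A B) : B.p0.states = A.Q0 := by
  simp [Slice.states, hB.1, hB.2.1]

/-- The run of a deterministic automaton obtained from the unified construction. -/
noncomputable def sliceRun (hB : ObtainedUnified A B) (hQ0 : A.Q0.Nonempty) (w : ℕ → Alp) :
    SliceRun A w fun i => B.c (B.run w i) (w i) where
  slice := B.run w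
  states_zero := hB.states_p0
  trans i := ((hB.2.2.2 _ (B.reachable_run w i) (w i)).nonempty_transition
    (hB.valid_run hQ0 w i)).some

end ObtainedUnified

/-- For an NBA `A` with nonempty initial set, any TDPA `B` obtained by
the unified construction (with arbitrary choices of valid merge partitions in each
transition) recognizes the same language: `L(B) = L(A)`. -/
theorem unified_correct {Q Alp : Type} [Fintype Q] (A : NBA Q Alp)
    (hQ0 : A.Q0.Nonempty) (B : TDPA (Slice Q) Alp) (hB : ObtainedUnified A B) :
    {w : ℕ → Alp | B.Accepts w} = {w : ℕ → Alp | A.Accepts w} := by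
  ext w
  let R := hB.sliceRun hQ0 w
  obtain ⟨m, hm, hle⟩ := exists_frequently_eq_and_eventually_le (l := Filter.atTop)
    fun i => (R.trans i).priority_le
  exact (TDPA.accepts_iff_even hm hle).trans (R.accepts_iff_even hm hle).symm
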